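/- Let a ∈ ℝ, c ≥ 0, and let f : [a,∞) → ℝ be a twice continuously differentiable positive function such that f(r) → ∞ and f''(r)/f(r) → c² as r → ∞. Then f'(r)/f(r) → c as r → ∞. -/

import Mathlib

theorem aux_stay (g g' : ℝ → ℝ) (x₀ L : ℝ)
    (hd : ∀ x, x₀ ≤ x → HasDerivAt g (g' x) x)
    (h0 : g x₀ ≤ L) (hL : ∀ x, x₀ ≤ x → g x = L → g' x < 0) :
    ∀ x, x₀ ≤ x → g x ≤ L := by
  intro x hx
  have := image_le_of_deriv_right_lt_deriv_boundary' (f := g) (f' := g') (a := x₀) (b := x)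
    (B := fun _ => L) (B' := fun _ => 0)
    (fun y hy => (hd y hy.1).continuousAt.continuousWithinAt)
    (fun y hy => (hd y hy.1).hasDerivWithinAt) h0 continuousOn_const
    (fun y _ => hasDerivWithinAt_const y _ L)
    (fun y hy h => hL y hy.1 h)
  exact this ⟨hx, le_refl x⟩

theorem aux_event (g g' : ℝ → ℝ) (x₀ L δ : ℝ) (hδ : 0 < δ)
    (hd : ∀ x, x₀ ≤ x → HasDerivAt g (g' x) x)
    (hL : ∀ x, x₀ ≤ x → L ≤ g x → g' x ≤ -δ) :
    ∃ R, ∀ x, R ≤ x → g x ≤ L := by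
  by_cases h : ∃ x, x₀ ≤ x ∧ g x ≤ L
  · obtain ⟨x₁, h1, h2⟩ := h
    refine ⟨x₁, aux_stay g g' x₁ L (fun x hx => hd x (h1.trans hx)) h2 ?_⟩
    intro x hx he
    have := hL x (h1.trans hx) he.ge
    linarith
  · push Not at h
    exfalso
    have hx : x₀ ≤ x₀ + (g x₀ - L) / δ := by
      have := h x₀ le_rfl
      have : 0 < (g x₀ - L) / δ := div_pos (by linarith) hδ
      linarith
    have key := image_le_of_deriv_right_le_deriv_boundary (f := g) (f' := g') (a := x₀)
      (b := x₀ + (g x₀ - L) / δ)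
      (B := fun x => g x₀ + (-δ) * (x - x₀)) (B' := fun _ => -δ)
      (fun y hy => (hd y hy.1).continuousAt.continuousWithinAt)
      (fun y hy => (hd y hy.1).hasDerivWithinAt) (by simp) (by fun_prop)
      (fun y _ => by
        have := (((hasDerivAt_id y).sub_const x₀).const_mul (-δ)).const_add (g x₀)
        simpa using this.hasDerivWithinAt)
      (fun y hy => hL y hy.1 (h y hy.1).le)
    have h1 := key ⟨hx, le_refl _⟩
    have h2 := h _ hx
    have h3 : δ * ((g x₀ - L) / δ) = g x₀ - L := by field_simp
    simp only [add_sub_cancel_left] at h1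
    linarith

/-- If `f : [a,∞) → ℝ` is a positive, twice continuously differentiable function
with `f(r) → ∞` and `f''(r)/f(r) → c²` as `r → ∞` (where `c ≥ 0`), then
`f'(r)/f(r) → c` as `r → ∞`. -/
theorem deriv_ratio_tendsto_of_second_deriv_ratio_tendsto
    (a c : ℝ) (hc : 0 ≤ c) (f f' f'' : ℝ → ℝ)
    (hfpos : ∀ r ∈ Set.Ici a, 0 < f r)
    (hf' : ∀ r ∈ Set.Ici a, HasDerivWithinAt f (f' r) (Set.Ici a) r)
    (hf'' : ∀ r ∈ Set.Ici a, HasDerivWithinAt f' (f'' r) (Set.Ici a) r)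
    (hf''cont : ContinuousOn f'' (Set.Ici a))
    (hfinf : Filter.Tendsto f Filter.atTop Filter.atTop)
    (hratio : Filter.Tendsto (fun r => f'' r / f r) Filter.atTop (nhds (c ^ 2))) :
    Filter.Tendsto (fun r => f' r / f r) Filter.atTop (nhds c) := by
  have hda : ∀ r, a < r → HasDerivAt f (f' r) r := fun r hr =>
    (hf' r hr.le).hasDerivAt (Ici_mem_nhds hr)
  have hdb : ∀ r, a < r → HasDerivAt f' (f'' r) r := fun r hr =>
    (hf'' r hr.le).hasDerivAt (Ici_mem_nhds hr)
  have hg : ∀ r, a < r → HasDerivAt (fun r => f' r / f r) (f'' r / f r - (f' r / f r) ^ 2) r := by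
    intro r hr
    have hp := hfpos r hr.le
    refine ((hdb r hr).fun_div (hda r hr) hp.ne').congr_deriv ?_
    field_simp
  have hfreq : ∀ R, ∃ x, R ≤ x ∧ a < x ∧ 0 < f' x / f x := by
    intro R
    by_contra hcon
    push Not at hcon
    set M := max R (a + 1) with hM
    have hMR : R ≤ M := le_max_left _ _
    have hMa : a + 1 ≤ M := le_max_right _ _
    have hanti : AntitoneOn f (Set.Ici M) := by
      refine antitoneOn_of_hasDerivWithinAt_nonpos (f' := f') (convex_Ici M) ?_ ?_ ?_
      · intro x hx
        have hx : M ≤ x := hx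
        exact (hda x (by linarith)).continuousAt.continuousWithinAt
      · intro x hx
        rw [interior_Ici] at hx
        have hx : M < x := hx
        exact (hda x (by linarith)).hasDerivWithinAt
      · intro x hx
        rw [interior_Ici] at hx
        have hx : M < x := hx
        have h1 := hcon x (by linarith) (by linarith)
        have hp := hfpos x (show a ≤ x by linarith)
        by_contra h
        push Not at h
        exact absurd (div_pos h hp) (not_lt.mpr h1)
    obtain ⟨x, hx1, hx2⟩ := ((hfinf.eventually_gt_atTop (f M)).and
      (Filter.eventually_ge_atTop M)).exists
    exact absurd (hanti (Set.mem_Ici.mpr le_rfl) hx2 hx2) (not_le.mpr hx1)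
  have hq : ∀ η, 0 < η → ∃ R, a < R ∧ ∀ x, R ≤ x →
      c ^ 2 - η < f'' x / f x ∧ f'' x / f x < c ^ 2 + η := by
    intro η hη
    obtain ⟨R, hR⟩ := Filter.eventually_atTop.mp
      (hratio.eventually (Ioo_mem_nhds (sub_lt_self (c ^ 2) hη) (lt_add_of_pos_right (c ^ 2) hη)))
    refine ⟨max R (a + 1), lt_of_lt_of_le (by linarith) (le_max_right _ _), fun x hx => ?_⟩
    exact hR x ((le_max_left _ _).trans hx)
  have hupper : ∀ ε, 0 < ε → ∃ R, ∀ x, R ≤ x → f' x / f x ≤ c + ε := by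
    intro ε hε
    obtain ⟨R, hRa, hR⟩ := hq (ε ^ 2 / 2) (by positivity)
    refine aux_event _ (fun r => f'' r / f r - (f' r / f r) ^ 2) R _ (ε ^ 2 / 2) (by positivity)
      (fun x hx => hg x (by linarith)) ?_
    intro x hx h
    have h1 := (hR x hx).2
    have h2 : (c + ε) ^ 2 ≤ (f' x / f x) ^ 2 := pow_le_pow_left₀ (by linarith) h 2
    have h3 : 0 ≤ c * ε := by positivity
    show f'' x / f x - (f' x / f x) ^ 2 ≤ _
    nlinarith
  have hlower : ∀ ε, 0 < ε → ∃ R, ∀ x, R ≤ x → c - ε ≤ f' x / f x := by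
    intro ε hε
    rcases hc.eq_or_lt with h0 | hcpos
    · obtain ⟨R, hRa, hR⟩ := hq (ε ^ 2) (by positivity)
      refine ⟨R, fun x hx => ?_⟩
      by_contra hlt
      push Not at hlt
      have hst := aux_stay _ (fun r => f'' r / f r - (f' r / f r) ^ 2) x (c - ε)
        (fun y hy => hg y (by linarith)) hlt.le (by
          intro y hy he
          have h1 := (hR y (hx.trans hy)).2
          show f'' y / f y - (f' y / f y) ^ 2 < 0
          have he : f' y / f y = c - ε := he
          rw [he, ← h0]
          rw [← h0] at h1
          nlinarith)
      obtain ⟨y, hy1, _, hy2⟩ := hfreq x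
      have h4 : f' y / f y ≤ c - ε := hst y hy1
      linarith
    · obtain ⟨e, he0, hee, hec⟩ : ∃ e, 0 < e ∧ e ≤ ε ∧ e ≤ c :=
        ⟨min ε c, lt_min hε hcpos, min_le_left _ _, min_le_right _ _⟩
      have hec0 : 0 < e * c := mul_pos he0 hcpos
      obtain ⟨R, hRa, hR⟩ := hq (e * c / 2) (by positivity)
      obtain ⟨x₀, hx0, _, hx2⟩ := hfreq R
      have hng : ∀ y, R ≤ y → HasDerivAt (fun r => -(f' r / f r))
          (-(f'' y / f y - (f' y / f y) ^ 2)) y := fun y hy => (hg y (by linarith)).fun_neg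
      have hnn := aux_stay (fun r => -(f' r / f r)) (fun r => -(f'' r / f r - (f' r / f r) ^ 2))
        x₀ 0 (fun y hy => hng y (hx0.trans hy)) (by show -(f' x₀ / f x₀) ≤ 0; linarith) (by
          intro y hy hz
          have h1 := (hR y (hx0.trans hy)).1
          have hz : f' y / f y = 0 := neg_eq_zero.mp hz
          show -(f'' y / f y - (f' y / f y) ^ 2) < 0
          rw [hz]
          nlinarith)
      obtain ⟨R', hR'⟩ := aux_event (fun r => -(f' r / f r))
        (fun r => -(f'' r / f r - (f' r / f r) ^ 2)) x₀ (-(c - e)) (e * c / 2) (by positivity)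
        (fun y hy => hng y (hx0.trans hy)) (by
          intro y hy hz
          have h1 := (hR y (hx0.trans hy)).1
          have h2 : -(f' y / f y) ≤ 0 := hnn y hy
          have hz : -(c - e) ≤ -(f' y / f y) := hz
          have h3 : (f' y / f y) ^ 2 ≤ (c - e) ^ 2 :=
            pow_le_pow_left₀ (by linarith) (by linarith) 2
          show -(f'' y / f y - (f' y / f y) ^ 2) ≤ _
          nlinarith)
      refine ⟨R', fun x hx => ?_⟩
      have h5 : -(f' x / f x) ≤ -(c - e) := hR' x hx
      linarith
  rw [Metric.tendsto_atTop]
  intro ε hε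
  obtain ⟨R₁, h1⟩ := hupper (ε / 2) (by positivity)
  obtain ⟨R₂, h2⟩ := hlower (ε / 2) (by positivity)
  refine ⟨max R₁ R₂, fun x hx => ?_⟩
  have h3 := h1 x ((le_max_left _ _).trans hx)
  have h4 := h2 x ((le_max_right _ _).trans hx)
  rw [Real.dist_eq, abs_lt]
  constructor <;> linarith
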